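/- Fix a real number Ω and define on ℝ² ∖ {0}, with r² = x² + y², the symmetric matrix field E_xx = (Ω/4π)(log r + y²/r²), E_xy = E_yx = −(Ω/4π) xy/r², E_yy = (Ω/4π)(log r + x²/r²). Then E_xx, E_xy, E_yy are locally integrable on ℝ², and the distributional planar incompatibility of E is Ω times the Dirac mass at the origin: for every φ ∈ C_c^∞(ℝ²), ∫_{ℝ²} ( E_xx ∂_y²φ + E_yy ∂_x²φ − 2 E_xy ∂_x∂_yφ ) dx dy = Ω φ(0,0). -/

import Mathlib

open MeasureTheory Real

/-- Partial derivative in the `α`-th coordinate direction of a function on `ℝ²`. -/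
noncomputable def pd (α : Fin 2) (f : EuclideanSpace ℝ (Fin 2) → ℝ) :
    EuclideanSpace ℝ (Fin 2) → ℝ :=
  fun x => fderiv ℝ f x (EuclideanSpace.single α 1)

/-- `E_xx` component of the wedge-disclination strain with Frank vector `Ω`. -/
noncomputable def Wxx (Ω : ℝ) (p : EuclideanSpace ℝ (Fin 2)) : ℝ :=
  Ω / (4 * π) * (Real.log (Real.sqrt ((p 0) ^ 2 + (p 1) ^ 2))
    + (p 1) ^ 2 / ((p 0) ^ 2 + (p 1) ^ 2))

/-- `E_xy = E_yx` component of the wedge-disclination strain. -/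
noncomputable def Wxy (Ω : ℝ) (p : EuclideanSpace ℝ (Fin 2)) : ℝ :=
  -(Ω / (4 * π)) * (p 0 * p 1 / ((p 0) ^ 2 + (p 1) ^ 2))

/-- `E_yy` component of the wedge-disclination strain. -/
noncomputable def Wyy (Ω : ℝ) (p : EuclideanSpace ℝ (Fin 2)) : ℝ :=
  Ω / (4 * π) * (Real.log (Real.sqrt ((p 0) ^ 2 + (p 1) ^ 2))
    + (p 0) ^ 2 / ((p 0) ^ 2 + (p 1) ^ 2))

/-!
Tested against `φ`, the strain `E` gives `Ω / 4π` times
`∫ log ‖p‖ * Δφ(p) + ‖p‖⁻² * D²φ(p)(p, p)`.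

Both terms reduce to the following identity in dimension `d`: along each ray from the origin,
`‖x‖ ^ (-d) * Dg(x) x` integrates, against the Jacobian `r ^ (d - 1)`, to `-g 0` by the fundamental
theorem of calculus, so `∫ ‖x‖ ^ (-d) * Dg(x) x = -d * μ(B) * g 0` with `B` the unit ball.
For `d = 2`:
* since `log ‖x‖` has weak gradient `x / ‖x‖²`, the first term is `-∫ ‖x‖⁻² * Dφ(x) x = 2π φ 0`;
* since `D²φ(x)(x, x)` is the radial derivative of `ψ(x) = Dφ(x) x - φ(x)`, and `ψ 0 = -φ 0`, the
  second term is `2π φ 0` as well.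
-/

open Set Metric Filter Module Topology
open scoped RealInnerProductSpace Laplacian

lemma fderiv_clm_apply_const_apply {𝕜 E F G : Type*} [NontriviallyNormedField 𝕜]
    [NormedAddCommGroup E] [NormedSpace 𝕜 E] [NormedAddCommGroup F] [NormedSpace 𝕜 F]
    [NormedAddCommGroup G] [NormedSpace 𝕜 G] {c : E → F →L[𝕜] G} {x : E}
    (hc : DifferentiableAt 𝕜 c x) (u : F) (v : E) :
    fderiv 𝕜 (fun y ↦ c y u) x v = fderiv 𝕜 c x v u := by
  simp [fderiv_clm_apply hc (differentiableAt_const u)]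

section Haar

variable {E F : Type*} [NormedAddCommGroup E] [NormedSpace ℝ E]
  [NormedAddCommGroup F] [NormedSpace ℝ F]

lemma integral_Ioi_fderiv_smul_eq_neg [CompleteSpace F] {g : E → F}
    (hg : ContDiff ℝ 1 g) (hg' : HasCompactSupport g) {u : E} (hu : u ≠ 0) :
    ∫ r in Ioi (0 : ℝ), fderiv ℝ g (r • u) u = -g 0 := by
  have hderiv (r : ℝ) : deriv (fun r : ℝ ↦ g (r • u)) r = fderiv ℝ g (r • u) u := by
    have hline : HasDerivAt (fun r : ℝ ↦ r • u) u r := by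
      simpa using (hasDerivAt_id r).smul_const u
    exact ((hg.differentiable one_ne_zero _).hasFDerivAt.comp_hasDerivAt r hline).deriv
  have hcomp : HasCompactSupport fun r : ℝ ↦ g (r • u) :=
    hg'.comp_isClosedEmbedding (isClosedEmbedding_smul_left hu)
  simpa [hderiv] using hcomp.integral_Ioi_deriv_eq (by fun_prop) 0

variable [FiniteDimensional ℝ E] [MeasurableSpace E] [BorelSpace E]
  {μ : Measure E} [μ.IsAddHaarMeasure]

lemma locallyIntegrable_comp_norm [Nontrivial E] {f : ℝ → F}
    (hf : ∀ R, IntegrableOn (fun r ↦ r ^ (finrank ℝ E - 1) • f r) (Ioo 0 R)) :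
    LocallyIntegrable (fun x : E ↦ f ‖x‖) μ := by
  refine locallyIntegrable_iff.2 fun K hK ↦ ?_
  obtain ⟨R, -, hR⟩ := hK.isBounded.exists_pos_norm_lt
  exact ((integrableOn_fun_norm_addHaar μ).2 (hf R)).mono_set
    fun x hx ↦ mem_ball_zero_iff.2 (hR x hx)

lemma locallyIntegrable_log_norm [Nontrivial E] :
    LocallyIntegrable (fun x : E ↦ log ‖x‖) μ := by
  refine locallyIntegrable_comp_norm fun R ↦ ?_
  have hlog := intervalIntegral.intervalIntegrable_log' (a := 0) (b := R)
  exact (hlog.continuousOn_mul (by fun_prop)).1.mono_set Ioo_subset_Ioc_self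

lemma locallyIntegrable_inv_norm_pow {k : ℕ} (hk : k < finrank ℝ E) :
    LocallyIntegrable (fun x : E ↦ (‖x‖ ^ k)⁻¹) μ := by
  have : Nontrivial E := nontrivial_of_finrank_pos (R := ℝ) (by lia)
  refine locallyIntegrable_comp_norm (f := fun r ↦ (r ^ k)⁻¹) fun R ↦ ?_
  have hpow : IntegrableOn (fun r : ℝ ↦ r ^ (finrank ℝ E - 1 - k)) (Ioo 0 R) :=
    (intervalIntegral.intervalIntegrable_pow _).1.mono_set Ioo_subset_Ioc_self
  refine hpow.congr_fun (fun r hr ↦ ?_) measurableSet_Ioo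
  exact pow_sub₀ r hr.1.ne' (by lia)

lemma integral_eq_integral_toSphere_integral_Ioi [Nontrivial E] {f : E → F}
    (hf : Integrable f μ) :
    ∫ x, f x ∂μ =
      ∫ u, (∫ r in Ioi (0 : ℝ), r ^ (finrank ℝ E - 1) • f (r • (u : E))) ∂μ.toSphere := by
  have he := (homeomorphUnitSphereProd E).measurableEmbedding
  have hmp := μ.measurePreserving_homeomorphUnitSphereProd
  have hf' : Integrable (fun q : sphere (0 : E) 1 × Ioi (0 : ℝ) ↦ f (q.2.1 • q.1.1))
      (μ.toSphere.prod (.volumeIoiPow (finrank ℝ E - 1))) := by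
    rw [← hmp.integrable_comp_emb he]
    have := (integrableOn_iff_comap_subtypeVal (measurableSet_singleton (0 : E)).compl).1
      hf.integrableOn
    refine this.congr (ae_of_all _ fun x ↦ ?_)
    simp [smul_smul, mul_inv_cancel₀ (norm_ne_zero_iff.2 x.2)]
  calc ∫ x, f x ∂μ = ∫ x : ({0}ᶜ : Set E), f x ∂μ.comap (↑) := by
        rw [integral_subtype_comap (measurableSet_singleton _).compl, restrict_compl_singleton]
    _ = ∫ q, f (q.2.1 • q.1.1) ∂μ.toSphere.prod (.volumeIoiPow (finrank ℝ E - 1)) := by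
        rw [← hmp.integral_comp he]
        refine integral_congr_ae (ae_of_all _ fun x ↦ ?_)
        simp [smul_smul, mul_inv_cancel₀ (norm_ne_zero_iff.2 x.2)]
    _ = ∫ u, (∫ r : Ioi (0 : ℝ), f (r.1 • u.1) ∂.volumeIoiPow (finrank ℝ E - 1)) ∂μ.toSphere :=
        integral_prod _ hf'
    _ = _ := by
        refine integral_congr_ae (ae_of_all _ fun u ↦ ?_)
        simp only [Measure.volumeIoiPow, ENNReal.ofReal]
        rw [integral_withDensity_eq_integral_smul (by fun_prop), integral_subtype_comap
          measurableSet_Ioi fun r ↦ Real.toNNReal (r ^ (finrank ℝ E - 1)) • f (r • u.1)]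
        refine setIntegral_congr_fun measurableSet_Ioi fun r hr ↦ ?_
        rw [NNReal.smul_def, Real.coe_toNNReal _ (pow_nonneg hr.out.le _)]

lemma integrable_inv_norm_pow_smul_clm_apply_self [Nontrivial E] {A : E → E →L[ℝ] F}
    (hA : Continuous A) (hA' : HasCompactSupport A) :
    Integrable (fun x ↦ (‖x‖ ^ finrank ℝ E)⁻¹ • A x x) μ := by
  have hd : finrank ℝ E - 1 + 1 = finrank ℝ E := Nat.sub_add_cancel finrank_pos
  have hbound := (locallyIntegrable_inv_norm_pow (μ := μ)
    (Nat.sub_one_lt_of_lt finrank_pos)).integrable_smul_right_of_hasCompactSupport hA.norm hA'.norm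
  refine hbound.mono' ?_ (ae_of_all _ fun x ↦ ?_)
  · have : Measurable fun x : E ↦ (‖x‖ ^ finrank ℝ E)⁻¹ := by fun_prop
    have : Continuous fun x ↦ A x x := by fun_prop
    fun_prop
  rcases eq_or_ne x 0 with rfl | hx
  · simp only [map_zero, smul_zero, norm_zero]
    positivity
  calc ‖(‖x‖ ^ finrank ℝ E)⁻¹ • A x x‖ ≤ (‖x‖ ^ finrank ℝ E)⁻¹ * (‖A x‖ * ‖x‖) := by
        rw [norm_smul, norm_inv, norm_pow, norm_norm]
        gcongr
        exact (A x).le_opNorm x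
    _ = (‖x‖ ^ (finrank ℝ E - 1))⁻¹ • ‖A x‖ := by
        have := norm_ne_zero_iff.2 hx
        rw [← hd, pow_succ, hd, smul_eq_mul]
        field_simp

lemma integral_inv_norm_pow_smul_fderiv_self [Nontrivial E] [CompleteSpace F] {g : E → F}
    (hg : ContDiff ℝ 1 g) (hg' : HasCompactSupport g) :
    ∫ x, (‖x‖ ^ finrank ℝ E)⁻¹ • fderiv ℝ g x x ∂μ =
      -((finrank ℝ E * μ.real (ball 0 1)) • g 0) := by
  have hray (u : sphere (0 : E) 1) :
      ∫ r in Ioi (0 : ℝ), r ^ (finrank ℝ E - 1) •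
        (‖r • (u : E)‖ ^ finrank ℝ E)⁻¹ • fderiv ℝ g (r • (u : E)) (r • (u : E)) = -g 0 := by
    rw [← integral_Ioi_fderiv_smul_eq_neg hg hg' (ne_zero_of_mem_unit_sphere u)]
    refine setIntegral_congr_fun measurableSet_Ioi fun r (hr : 0 < r) ↦ ?_
    have hcancel : r ^ (finrank ℝ E - 1) * (r ^ finrank ℝ E)⁻¹ * r = 1 := by
      rw [mul_right_comm, pow_sub_one_mul finrank_pos.ne', mul_inv_cancel₀ (by positivity)]
    simp [norm_smul, smul_smul, abs_of_pos hr, ← mul_assoc, hcancel]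
  rw [integral_eq_integral_toSphere_integral_Ioi (integrable_inv_norm_pow_smul_clm_apply_self
    (hg.continuous_fderiv one_ne_zero) (hg'.fderiv (𝕜 := ℝ)))]
  simp only [hray, integral_const, μ.toSphere_real_apply_univ, smul_neg]

lemma integrable_inv_norm_pow_smul_fderiv_fderiv_self [Nontrivial E] {φ : E → F}
    (hφ : ContDiff ℝ 2 φ) (hφ' : HasCompactSupport φ) :
    Integrable (fun x ↦ (‖x‖ ^ finrank ℝ E)⁻¹ • fderiv ℝ (fderiv ℝ φ) x x x) μ := by
  have : Continuous (fderiv ℝ (fderiv ℝ φ)) :=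
    (hφ.fderiv_right (m := 1) (by norm_num)).continuous_fderiv one_ne_zero
  refine integrable_inv_norm_pow_smul_clm_apply_self
    (A := fun x ↦ fderiv ℝ (fderiv ℝ φ) x x) (by fun_prop) ?_
  exact ((hφ'.fderiv (𝕜 := ℝ)).fderiv (𝕜 := ℝ)).mono fun x hx h ↦ hx (by simp [h])

lemma integral_inv_norm_pow_smul_fderiv_fderiv_self [Nontrivial E] [CompleteSpace F] {φ : E → F}
    (hφ : ContDiff ℝ 2 φ) (hφ' : HasCompactSupport φ) :
    ∫ x, (‖x‖ ^ finrank ℝ E)⁻¹ • fderiv ℝ (fderiv ℝ φ) x x x ∂μ =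
      (finrank ℝ E * μ.real (ball 0 1)) • φ 0 := by
  have hφ₁ : ContDiff ℝ 1 (fderiv ℝ φ) := hφ.fderiv_right (by norm_num)
  let ψ : E → F := fun x ↦ fderiv ℝ φ x x - φ x
  have hψ : ContDiff ℝ 1 ψ :=
    (hφ₁.clm_apply contDiff_id).sub (hφ.of_le one_le_two)
  have hψ' : HasCompactSupport ψ := by
    refine HasCompactSupport.sub ?_ hφ'
    exact (hφ'.fderiv (𝕜 := ℝ)).mono fun x hx h ↦ hx (by simp [h])
  have hfderiv (x : E) : fderiv ℝ ψ x x = fderiv ℝ (fderiv ℝ φ) x x x := by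
    have h₁ := (hφ.differentiable two_ne_zero x).hasFDerivAt
    have h₂ := (hφ₁.differentiable one_ne_zero x).hasFDerivAt
    have hψx : HasFDerivAt ψ _ x := (h₂.clm_apply (hasFDerivAt_id x)).sub h₁
    simp [hψx.fderiv]
  simpa [hfderiv, ψ] using integral_inv_norm_pow_smul_fderiv_self (μ := μ) hψ hψ'

end Haar

lemma abs_log_sq_add_div_two_le {r t : ℝ} (hr : 0 < r) (ht : 0 < t) (ht₁ : t ≤ 1) :
    |log (r ^ 2 + t) / 2| ≤ |log r| + log (r ^ 2 + 1) / 2 := by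
  have hlow : 2 * log r ≤ log (r ^ 2 + t) := by
    rw [← Nat.cast_ofNat, ← log_pow]
    exact log_le_log (by positivity) (by linarith)
  have hup : log (r ^ 2 + t) ≤ log (r ^ 2 + 1) := log_le_log (by positivity) (by linarith)
  have hpos : 0 ≤ log (r ^ 2 + 1) := log_nonneg (by nlinarith)
  rw [abs_le]
  constructor <;> linarith [neg_abs_le (log r), abs_nonneg (log r)]

section InnerProductSpace

variable {E F : Type*} [NormedAddCommGroup E] [InnerProductSpace ℝ E]
  [NormedAddCommGroup F] [NormedSpace ℝ F]

lemma hasFDerivAt_log_norm_sq_add {t : ℝ} (ht : 0 < t) (x : E) :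
    HasFDerivAt (fun x : E ↦ log (‖x‖ ^ 2 + t) / 2) ((‖x‖ ^ 2 + t)⁻¹ • innerSL ℝ x) x := by
  have h := (((hasStrictFDerivAt_norm_sq x).hasFDerivAt.add_const t).log
    (by positivity)).const_mul (1 / 2)
  refine (h.congr_fderiv ?_).congr_of_eventuallyEq (.of_forall fun y ↦ by ring)
  ext v
  simp
  ring

lemma abs_inner_div_norm_sq_add_le {t : ℝ} (ht : 0 ≤ t) (x v : E) :
    |⟪x, v⟫ / (‖x‖ ^ 2 + t)| ≤ ‖v‖ * ‖x‖⁻¹ := by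
  rcases eq_or_ne x 0 with rfl | hx
  · simp
  have := norm_pos_iff.2 hx
  calc |⟪x, v⟫ / (‖x‖ ^ 2 + t)| = |⟪x, v⟫| / (‖x‖ ^ 2 + t) := by
        rw [abs_div, abs_of_pos (a := ‖x‖ ^ 2 + t) (by positivity)]
    _ ≤ ‖x‖ * ‖v‖ / ‖x‖ ^ 2 := by
        gcongr
        · exact abs_real_inner_le_norm x v
        · linarith
    _ = ‖v‖ * ‖x‖⁻¹ := by field_simp

variable [FiniteDimensional ℝ E]

lemma laplacian_eq_sum_fderiv_fderiv {ι : Type*} [Fintype ι] (b : OrthonormalBasis ι ℝ E)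
    (φ : E → F) (x : E) : Δ φ x = ∑ i, fderiv ℝ (fderiv ℝ φ) x (b i) (b i) := by
  simp [InnerProductSpace.laplacian_eq_iteratedFDeriv_orthonormalBasis φ b,
    iteratedFDeriv_two_apply]

variable [MeasurableSpace E] [BorelSpace E]
  {μ : Measure E} [μ.IsAddHaarMeasure]

lemma integral_log_norm_sq_add_smul_fderiv {t : ℝ} (ht : 0 < t) {g : E → F} (hg : ContDiff ℝ 1 g)
    (hg' : HasCompactSupport g) (v : E) :
    ∫ x, (log (‖x‖ ^ 2 + t) / 2) • fderiv ℝ g x v ∂μ =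
      -∫ x, (⟪x, v⟫ / (‖x‖ ^ 2 + t)) • g x ∂μ := by
  have hfderiv (x : E) : fderiv ℝ (fun x : E ↦ log (‖x‖ ^ 2 + t) / 2) x v =
      ⟪x, v⟫ / (‖x‖ ^ 2 + t) := by
    rw [(hasFDerivAt_log_norm_sq_add ht x).fderiv]
    simp [div_eq_inv_mul]
  have hpos (x : E) : ‖x‖ ^ 2 + t ≠ 0 := by positivity
  have := hg.continuous_fderiv one_ne_zero
  have hlog : Continuous fun x : E ↦ log (‖x‖ ^ 2 + t) / 2 := by fun_prop (disch := exact hpos _)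
  have hdiv : Continuous fun x : E ↦ ⟪x, v⟫ / (‖x‖ ^ 2 + t) := by fun_prop (disch := exact hpos _)
  simp_rw [← hfderiv]
  refine integral_smul_fderiv_eq_neg_fderiv_smul_of_integrable ?_ ?_ ?_
    (fun x _ ↦ (hasFDerivAt_log_norm_sq_add ht x).differentiableAt)
    (fun x _ ↦ hg.differentiable one_ne_zero x)
  · simp_rw [hfderiv]
    exact (hdiv.smul hg.continuous).integrable_of_hasCompactSupport hg'.smul_left
  · exact (hlog.smul (by fun_prop)).integrable_of_hasCompactSupport
      (hg'.fderiv_apply (𝕜 := ℝ) v).smul_left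
  · exact (hlog.smul hg.continuous).integrable_of_hasCompactSupport hg'.smul_left

lemma tendsto_integral_log_norm_sq_add_smul [Nontrivial E] {h : E → F} (hh : Continuous h)
    (hh' : HasCompactSupport h) :
    Tendsto (fun t : ℝ ↦ ∫ x, (log (‖x‖ ^ 2 + t) / 2) • h x ∂μ) (𝓝[>] 0)
      (𝓝 (∫ x, log ‖x‖ • h x ∂μ)) := by
  have hne : ∀ᵐ x ∂μ, x ≠ 0 := μ.ae_ne 0
  have hsmooth : Continuous fun x : E ↦ log (‖x‖ ^ 2 + 1) / 2 := by
    fun_prop (disch := intros; positivity)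
  have hbound : LocallyIntegrable (fun x : E ↦ |log ‖x‖| + log (‖x‖ ^ 2 + 1) / 2) μ :=
    LocallyIntegrable.add (fun x ↦ (locallyIntegrable_log_norm x).norm) hsmooth.locallyIntegrable
  refine tendsto_integral_filter_of_dominated_convergence
    (fun x ↦ (|log ‖x‖| + log (‖x‖ ^ 2 + 1) / 2) * ‖h x‖) ?_ ?_
    (hbound.integrable_smul_right_of_hasCompactSupport hh.norm hh'.norm) ?_
  · refine .of_forall fun t ↦ ?_
    have : Measurable fun x : E ↦ log (‖x‖ ^ 2 + t) / 2 := by fun_prop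
    exact this.aestronglyMeasurable.smul hh.aestronglyMeasurable
  · filter_upwards [Ioo_mem_nhdsGT one_pos] with t ht
    filter_upwards [hne] with x hx
    rw [norm_smul]
    exact mul_le_mul_of_nonneg_right (abs_log_sq_add_div_two_le (norm_pos_iff.2 hx) ht.1 ht.2.le)
      (norm_nonneg _)
  · filter_upwards [hne] with x hx
    have hlim : Tendsto (fun t : ℝ ↦ log (‖x‖ ^ 2 + t) / 2) (𝓝[>] 0)
        (𝓝 (log (‖x‖ ^ 2 + 0) / 2)) := by
      refine tendsto_nhdsWithin_of_tendsto_nhds (ContinuousAt.tendsto ?_)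
      fun_prop (disch := simp [hx])
    simpa using hlim.smul_const (h x)

lemma locallyIntegrable_inner_div_norm_sq (hE : 1 < finrank ℝ E) (v : E) :
    LocallyIntegrable (fun x ↦ ⟪x, v⟫ / ‖x‖ ^ 2) μ := by
  have hmeas : Measurable fun x : E ↦ ⟪x, v⟫ / ‖x‖ ^ 2 := by fun_prop
  refine ((locallyIntegrable_inv_norm_pow hE).smul ‖v‖).mono hmeas.aestronglyMeasurable
    (ae_of_all _ fun x ↦ ?_)
  simpa [abs_mul, abs_div] using abs_inner_div_norm_sq_add_le le_rfl x v

lemma tendsto_integral_inner_div_norm_sq_add_smul (hE : 1 < finrank ℝ E) {h : E → F}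
    (hh : Continuous h) (hh' : HasCompactSupport h) (v : E) :
    Tendsto (fun t : ℝ ↦ ∫ x, (⟪x, v⟫ / (‖x‖ ^ 2 + t)) • h x ∂μ) (𝓝[>] 0)
      (𝓝 (∫ x, (⟪x, v⟫ / ‖x‖ ^ 2) • h x ∂μ)) := by
  have : Nontrivial E := nontrivial_of_finrank_pos (R := ℝ) (by lia)
  have hbound := ((locallyIntegrable_inv_norm_pow (μ := μ) hE).smul
    ‖v‖).integrable_smul_right_of_hasCompactSupport hh.norm hh'.norm
  refine tendsto_integral_filter_of_dominated_convergence _ ?_ ?_ hbound ?_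
  · refine .of_forall fun t ↦ ?_
    have : Measurable fun x : E ↦ ⟪x, v⟫ / (‖x‖ ^ 2 + t) := by fun_prop
    exact this.aestronglyMeasurable.smul hh.aestronglyMeasurable
  · filter_upwards [self_mem_nhdsWithin] with t (ht : 0 < t)
    refine ae_of_all _ fun x ↦ ?_
    rw [norm_smul]
    refine mul_le_mul_of_nonneg_right ?_ (norm_nonneg _)
    simpa [abs_div, abs_mul] using abs_inner_div_norm_sq_add_le ht.le x v
  · filter_upwards [μ.ae_ne 0] with x hx
    have hlim : Tendsto (fun t : ℝ ↦ ⟪x, v⟫ / (‖x‖ ^ 2 + t)) (𝓝[>] 0)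
        (𝓝 (⟪x, v⟫ / (‖x‖ ^ 2 + 0))) := by
      refine tendsto_nhdsWithin_of_tendsto_nhds (ContinuousAt.tendsto ?_)
      fun_prop (disch := simpa)
    simpa using hlim.smul_const (h x)

lemma integral_log_norm_smul_fderiv (hE : 1 < finrank ℝ E) {g : E → F} (hg : ContDiff ℝ 1 g)
    (hg' : HasCompactSupport g) (v : E) :
    ∫ x, log ‖x‖ • fderiv ℝ g x v ∂μ = -∫ x, (⟪x, v⟫ / ‖x‖ ^ 2) • g x ∂μ := by
  have : Nontrivial E := nontrivial_of_finrank_pos (R := ℝ) (by lia)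
  have := hg.continuous_fderiv one_ne_zero
  refine tendsto_nhds_unique (tendsto_integral_log_norm_sq_add_smul (by fun_prop)
    (hg'.fderiv_apply (𝕜 := ℝ) v)) ?_
  refine (tendsto_integral_inner_div_norm_sq_add_smul hE hg.continuous hg' v).neg.congr' ?_
  filter_upwards [self_mem_nhdsWithin] with t ht
  exact (integral_log_norm_sq_add_smul_fderiv ht hg hg' v).symm

lemma integrable_log_norm_smul_laplacian [Nontrivial E] {φ : E → F} (hφ : ContDiff ℝ 2 φ)
    (hφ' : HasCompactSupport φ) : Integrable (fun x ↦ log ‖x‖ • Δ φ x) μ := by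
  have : Continuous (fderiv ℝ (fderiv ℝ φ)) :=
    (hφ.fderiv_right (m := 1) (by norm_num)).continuous_fderiv one_ne_zero
  have hΔ : Δ φ = fun x ↦ ∑ i, fderiv ℝ (fderiv ℝ φ) x (stdOrthonormalBasis ℝ E i)
      (stdOrthonormalBasis ℝ E i) :=
    funext (laplacian_eq_sum_fderiv_fderiv _ φ)
  refine locallyIntegrable_log_norm.integrable_smul_right_of_hasCompactSupport ?_ ?_
  · rw [hΔ]
    fun_prop
  · refine ((hφ'.fderiv (𝕜 := ℝ)).fderiv (𝕜 := ℝ)).mono fun x hx h ↦ hx ?_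
    simp [hΔ, h]

lemma integral_log_norm_smul_laplacian (hE : 1 < finrank ℝ E) {φ : E → F} (hφ : ContDiff ℝ 2 φ)
    (hφ' : HasCompactSupport φ) :
    ∫ x, log ‖x‖ • Δ φ x ∂μ = -∫ x, (‖x‖ ^ 2)⁻¹ • fderiv ℝ φ x x ∂μ := by
  have : Nontrivial E := nontrivial_of_finrank_pos (R := ℝ) (by lia)
  let b := stdOrthonormalBasis ℝ E
  have hφ₁ : ContDiff ℝ 1 (fderiv ℝ φ) := hφ.fderiv_right (by norm_num)
  have hpartial (i) : ContDiff ℝ 1 fun x ↦ fderiv ℝ φ x (b i) := by fun_prop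
  have hpartial' (i) : HasCompactSupport fun x ↦ fderiv ℝ φ x (b i) :=
    hφ'.fderiv_apply (𝕜 := ℝ) (b i)
  have hlog (i) :
      Integrable (fun x ↦ log ‖x‖ • fderiv ℝ (fun x ↦ fderiv ℝ φ x (b i)) x (b i)) μ := by
    have := (hpartial i).continuous_fderiv one_ne_zero
    exact locallyIntegrable_log_norm.integrable_smul_right_of_hasCompactSupport (by fun_prop)
      ((hpartial' i).fderiv_apply (𝕜 := ℝ) (b i))
  have hinner (i) : Integrable (fun x ↦ (⟪x, b i⟫ / ‖x‖ ^ 2) • fderiv ℝ φ x (b i)) μ :=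
    (locallyIntegrable_inner_div_norm_sq hE _).integrable_smul_right_of_hasCompactSupport
      (hpartial i).continuous (hpartial' i)
  have hexpand (x : E) :
      ∑ i, (⟪x, b i⟫ / ‖x‖ ^ 2) • fderiv ℝ φ x (b i) = (‖x‖ ^ 2)⁻¹ • fderiv ℝ φ x x := by
    have hsum : fderiv ℝ φ x x = ∑ i, ⟪x, b i⟫ • fderiv ℝ φ x (b i) := by
      simpa [real_inner_comm] using congrArg (fderiv ℝ φ x) (b.sum_repr' x).symm
    simp only [hsum, Finset.smul_sum, smul_smul, div_eq_inv_mul]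
  have hlaplacian (x : E) :
      Δ φ x = ∑ i, fderiv ℝ (fun x ↦ fderiv ℝ φ x (b i)) x (b i) := by
    simp only [laplacian_eq_sum_fderiv_fderiv b,
      fderiv_clm_apply_const_apply (hφ₁.differentiable one_ne_zero x)]
  simp_rw [hlaplacian, Finset.smul_sum, ← hexpand]
  rw [integral_finsetSum _ fun i _ ↦ hlog i, integral_finsetSum _ fun i _ ↦ hinner i,
    ← Finset.sum_neg_distrib]
  exact Finset.sum_congr rfl fun i _ ↦
    integral_log_norm_smul_fderiv hE (hpartial i) (hpartial' i) (b i)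

lemma integral_log_norm_smul_laplacian_of_finrank_eq_two [CompleteSpace F] (hE : finrank ℝ E = 2)
    {φ : E → F} (hφ : ContDiff ℝ 2 φ) (hφ' : HasCompactSupport φ) :
    ∫ x, log ‖x‖ • Δ φ x ∂μ = (2 * μ.real (ball 0 1)) • φ 0 := by
  have : Nontrivial E := nontrivial_of_finrank_pos (R := ℝ) (by lia)
  rw [integral_log_norm_smul_laplacian (by lia) hφ hφ']
  simpa [hE] using congrArg Neg.neg
    (integral_inv_norm_pow_smul_fderiv_self (μ := μ) (hφ.of_le one_le_two) hφ')

lemma integral_log_norm_smul_laplacian_add_fderiv_fderiv_self [CompleteSpace F]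
    (hE : finrank ℝ E = 2) {φ : E → F} (hφ : ContDiff ℝ 2 φ) (hφ' : HasCompactSupport φ) :
    ∫ x, (log ‖x‖ • Δ φ x + (‖x‖ ^ 2)⁻¹ • fderiv ℝ (fderiv ℝ φ) x x x) ∂μ =
      (4 * μ.real (ball 0 1)) • φ 0 := by
  have : Nontrivial E := nontrivial_of_finrank_pos (R := ℝ) (by lia)
  have hradial := integrable_inv_norm_pow_smul_fderiv_fderiv_self (μ := μ) hφ hφ'
  have hradial_integral := integral_inv_norm_pow_smul_fderiv_fderiv_self (μ := μ) hφ hφ'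
  rw [hE] at hradial hradial_integral
  rw [integral_add (integrable_log_norm_smul_laplacian hφ hφ') hradial, hradial_integral,
    integral_log_norm_smul_laplacian_of_finrank_eq_two hE hφ hφ', ← add_smul]
  congr 1
  push_cast
  ring

end InnerProductSpace

section Plane

lemma norm_eq_sqrt_sq_add_sq (p : EuclideanSpace ℝ (Fin 2)) : ‖p‖ = √(p 0 ^ 2 + p 1 ^ 2) := by
  simp [EuclideanSpace.norm_eq]

lemma norm_sq_eq_sq_add_sq (p : EuclideanSpace ℝ (Fin 2)) : ‖p‖ ^ 2 = p 0 ^ 2 + p 1 ^ 2 := by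
  simp [EuclideanSpace.norm_sq_eq]

lemma locallyIntegrable_mul_div_norm_sq {ι : Type*} [Fintype ι] (i j : ι) :
    LocallyIntegrable (fun p : EuclideanSpace ℝ ι ↦ p i * p j / ‖p‖ ^ 2) volume := by
  have hmeas : Measurable fun p : EuclideanSpace ℝ ι ↦ p i * p j / ‖p‖ ^ 2 := by fun_prop
  refine (locallyIntegrable_const (1 : ℝ)).mono hmeas.aestronglyMeasurable (ae_of_all _ fun p ↦ ?_)
  rw [norm_div, norm_mul, norm_pow, norm_norm, norm_one, sq]
  exact div_le_one_of_le₀ (mul_le_mul (PiLp.norm_apply_le p i) (PiLp.norm_apply_le p j)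
    (norm_nonneg _) (norm_nonneg _)) (by positivity)

lemma Wxx_eq (Ω : ℝ) (p : EuclideanSpace ℝ (Fin 2)) :
    Wxx Ω p = Ω / (4 * π) * (log ‖p‖ + p 1 * p 1 / ‖p‖ ^ 2) := by
  rw [Wxx, ← norm_eq_sqrt_sq_add_sq, ← norm_sq_eq_sq_add_sq, sq (p 1)]

lemma Wxy_eq (Ω : ℝ) (p : EuclideanSpace ℝ (Fin 2)) :
    Wxy Ω p = -(Ω / (4 * π)) * (p 0 * p 1 / ‖p‖ ^ 2) := by
  rw [Wxy, ← norm_sq_eq_sq_add_sq]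

lemma Wyy_eq (Ω : ℝ) (p : EuclideanSpace ℝ (Fin 2)) :
    Wyy Ω p = Ω / (4 * π) * (log ‖p‖ + p 0 * p 0 / ‖p‖ ^ 2) := by
  rw [Wyy, ← norm_eq_sqrt_sq_add_sq, ← norm_sq_eq_sq_add_sq, sq (p 0)]

lemma locallyIntegrable_Wxx (Ω : ℝ) : LocallyIntegrable (Wxx Ω) volume := by
  rw [funext (Wxx_eq Ω)]
  exact (locallyIntegrable_log_norm.add (locallyIntegrable_mul_div_norm_sq 1 1)).smul (Ω / (4 * π))

lemma locallyIntegrable_Wxy (Ω : ℝ) : LocallyIntegrable (Wxy Ω) volume := by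
  rw [funext (Wxy_eq Ω)]
  exact (locallyIntegrable_mul_div_norm_sq 0 1).smul (-(Ω / (4 * π)))

lemma locallyIntegrable_Wyy (Ω : ℝ) : LocallyIntegrable (Wyy Ω) volume := by
  rw [funext (Wyy_eq Ω)]
  exact (locallyIntegrable_log_norm.add (locallyIntegrable_mul_div_norm_sq 0 0)).smul (Ω / (4 * π))

variable {φ : EuclideanSpace ℝ (Fin 2) → ℝ}

lemma pd_pd_apply (hφ : ContDiff ℝ 2 φ) (α β : Fin 2) (p : EuclideanSpace ℝ (Fin 2)) :
    pd α (pd β φ) p =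
      fderiv ℝ (fderiv ℝ φ) p (EuclideanSpace.single α 1) (EuclideanSpace.single β 1) := by
  have hφ₁ : ContDiff ℝ 1 (fderiv ℝ φ) := hφ.fderiv_right (by norm_num)
  exact fderiv_clm_apply_const_apply (hφ₁.differentiable one_ne_zero p) _ _

lemma laplacian_eq_pd_pd_add_pd_pd (hφ : ContDiff ℝ 2 φ) (p : EuclideanSpace ℝ (Fin 2)) :
    Δ φ p = pd 0 (pd 0 φ) p + pd 1 (pd 1 φ) p := by
  simp [laplacian_eq_sum_fderiv_fderiv (EuclideanSpace.basisFun (Fin 2) ℝ), pd_pd_apply hφ]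

lemma fderiv_fderiv_self_eq_pd_pd (hφ : ContDiff ℝ 2 φ) (p : EuclideanSpace ℝ (Fin 2)) :
    fderiv ℝ (fderiv ℝ φ) p p p =
      p 0 ^ 2 * pd 0 (pd 0 φ) p + 2 * (p 0 * p 1) * pd 0 (pd 1 φ) p
        + p 1 ^ 2 * pd 1 (pd 1 φ) p := by
  have hsymm : pd 1 (pd 0 φ) p = pd 0 (pd 1 φ) p := by
    rw [pd_pd_apply hφ, pd_pd_apply hφ, hφ.contDiffAt.isSymmSndFDerivAt (by simp)]
  have hp : p = p 0 • EuclideanSpace.single 0 1 + p 1 • EuclideanSpace.single 1 1 := by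
    ext i
    fin_cases i <;> simp
  calc fderiv ℝ (fderiv ℝ φ) p p p
      = p 0 * (p 0 * pd 0 (pd 0 φ) p + p 1 * pd 0 (pd 1 φ) p)
        + p 1 * (p 0 * pd 1 (pd 0 φ) p + p 1 * pd 1 (pd 1 φ) p) := by
        simp only [pd_pd_apply hφ]
        generalize fderiv ℝ (fderiv ℝ φ) p = B
        conv_lhs => rw [hp]
        simp
    _ = _ := by
        rw [hsymm]
        ring

lemma wedge_disclination_integrand_eq (Ω : ℝ) (hφ : ContDiff ℝ 2 φ)
    (p : EuclideanSpace ℝ (Fin 2)) :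
    Wxx Ω p * pd 1 (pd 1 φ) p + Wyy Ω p * pd 0 (pd 0 φ) p - 2 * Wxy Ω p * pd 0 (pd 1 φ) p =
      Ω / (4 * π) * (log ‖p‖ * Δ φ p + (‖p‖ ^ 2)⁻¹ * fderiv ℝ (fderiv ℝ φ) p p p) := by
  rw [Wxx_eq, Wxy_eq, Wyy_eq, laplacian_eq_pd_pd_add_pd_pd hφ, fderiv_fderiv_self_eq_pd_pd hφ]
  ring

end Plane

theorem wedge_disclination_incompatibility_general (Ω : ℝ) :
    LocallyIntegrable (Wxx Ω) volume ∧
    LocallyIntegrable (Wxy Ω) volume ∧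
    LocallyIntegrable (Wyy Ω) volume ∧
    ∀ φ : EuclideanSpace ℝ (Fin 2) → ℝ, ContDiff ℝ 2 φ → HasCompactSupport φ →
      ∫ p : EuclideanSpace ℝ (Fin 2),
          (Wxx Ω p * pd 1 (pd 1 φ) p + Wyy Ω p * pd 0 (pd 0 φ) p
            - 2 * Wxy Ω p * pd 0 (pd 1 φ) p)
        = Ω * φ 0 := by
  refine ⟨locallyIntegrable_Wxx Ω, locallyIntegrable_Wxy Ω, locallyIntegrable_Wyy Ω,
    fun φ hφ hφ' ↦ ?_⟩
  have hball : volume.real (ball (0 : EuclideanSpace ℝ (Fin 2)) 1) = π := by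
    simp [measureReal_def, EuclideanSpace.volume_ball_fin_two, pi_nonneg]
  have hint := integral_log_norm_smul_laplacian_add_fderiv_fderiv_self (μ := volume)
    finrank_euclideanSpace_fin hφ hφ'
  simp_rw [wedge_disclination_integrand_eq Ω hφ]
  rw [integral_const_mul]
  simp only [smul_eq_mul] at hint
  rw [hint, hball]
  field_simp

/-- **Incompatibility of a wedge disclination** (equation (2.46) of the paper).
The strain components are locally integrable and the distributional planar
incompatibility `∂_y²E_xx + ∂_x²E_yy − 2∂_x∂_yE_xy` equals `Ω δ₀`. -/
theorem wedge_disclination_incompatibility (Ω : ℝ) :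
    LocallyIntegrable (Wxx Ω) volume ∧
    LocallyIntegrable (Wxy Ω) volume ∧
    LocallyIntegrable (Wyy Ω) volume ∧
    ∀ φ : EuclideanSpace ℝ (Fin 2) → ℝ, ContDiff ℝ (⊤ : ℕ∞) φ → HasCompactSupport φ →
      ∫ p : EuclideanSpace ℝ (Fin 2),
          (Wxx Ω p * pd 1 (pd 1 φ) p + Wyy Ω p * pd 0 (pd 0 φ) p
            - 2 * Wxy Ω p * pd 0 (pd 1 φ) p)
        = Ω * φ 0 := by
  obtain ⟨hxx, hxy, hyy, h⟩ := wedge_disclination_incompatibility_general Ω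
  exact ⟨hxx, hxy, hyy, fun φ hφ hφ' ↦ h φ (contDiff_infty.1 hφ 2) hφ'⟩
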